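/- Let μ and ν be probability measures on (Q, O) with dν = (e^{-V}/Z) dμ for V measurable, Z = ∫ e^{-V} dμ ∈ (0, ∞), and suppose the Markov property holds for μ: for every F that is O_{Ω̄}-measurable, E^μ_{Ω^c} F = E^μ_{∂Ω} F, and suppose V = V_Ω + V_{Ω^c} with V_Ω being O_{Ω̄}-measurable and V_{Ω^c} being O_{Ω^c}-measurable, with all relevant integrability. Then ν also satisfies the Markov property: for F bounded and O_{Ω̄}-measurable, E^ν_{Ω^c} F = E^ν_{∂Ω} F, using the identity E^ν_A F = E^μ_A(F e^{-V_{A^c}}) / E^μ_A(e^{-V_{A^c}}). -/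

import Mathlib

open MeasureTheory

theorem aux_pos {Q : Type*} {m mO : MeasurableSpace Q} (hm : m ≤ mO) (μ : Measure Q)
    [IsFiniteMeasure μ] (ρ : Q → ℝ) (hρ : Integrable ρ μ) (hpos : ∀ x, 0 < ρ x) :
    ∀ᵐ x ∂μ, 0 < (μ[ρ|m]) x := by
  have hA : MeasurableSet[m] {x | (μ[ρ|m]) x ≤ 0} :=
    (stronglyMeasurable_condExp (μ := μ) (m := m) (f := ρ)).measurable measurableSet_Iic
  have e := setIntegral_condExp hm hρ hA
  have hle : ∫ x in {x | (μ[ρ|m]) x ≤ 0}, (μ[ρ|m]) x ∂μ ≤ 0 :=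
    setIntegral_nonpos (hm _ hA) (fun x hx => hx)
  by_contra hcon
  have hne : 0 < μ {x | (μ[ρ|m]) x ≤ 0} := by
    rw [ae_iff] at hcon
    simp only [not_lt] at hcon
    exact pos_iff_ne_zero.mpr hcon
  have : 0 < ∫ x in {x | (μ[ρ|m]) x ≤ 0}, ρ x ∂μ := by
    rw [setIntegral_pos_iff_support_of_nonneg_ae
      (Filter.Eventually.of_forall fun x => (hpos x).le) hρ.integrableOn]
    have hs : Function.support ρ = Set.univ := by
      ext x; simp [(hpos x).ne']
    rw [hs, Set.univ_inter]; exact hne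
  linarith

theorem aux_dens {Q : Type*} {m mO : MeasurableSpace Q} (hm : m ≤ mO) (μ ν : Measure Q)
    [IsFiniteMeasure μ] [IsFiniteMeasure ν] (ρ : Q → ℝ) (hρm : Measurable ρ)
    (hρ : Integrable ρ μ) (hpos : ∀ x, 0 < ρ x)
    (hν : ν = μ.withDensity fun x => ENNReal.ofReal (ρ x))
    (F : Q → ℝ) (hF : Integrable F ν) :
    (fun x => (ν[F|m]) x * (μ[ρ|m]) x) =ᵐ[μ] μ[fun x => F x * ρ x|m] := by
  have hi : ∀ G : Q → ℝ, Integrable G ν → Integrable (fun x => G x * ρ x) μ := by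
    intro G hG
    rw [hν, integrable_withDensity_iff hρm.ennreal_ofReal (by simp)] at hG
    simpa [ENNReal.toReal_ofReal (hpos _).le] using hG
  have hs : ∀ G : Q → ℝ, ∀ A, MeasurableSet A →
      ∫ x in A, G x ∂ν = ∫ x in A, G x * ρ x ∂μ := by
    intro G A hA
    rw [hν, setIntegral_withDensity_eq_setIntegral_toReal_smul hρm.ennreal_ofReal
      (by simp) _ hA]
    simp [ENNReal.toReal_ofReal (hpos _).le, mul_comm]
  have hX : Integrable (ν[F|m]) ν := integrable_condExp
  have e1 : μ[fun x => (ν[F|m]) x * ρ x|m] =ᵐ[μ] fun x => (ν[F|m]) x * (μ[ρ|m]) x :=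
    condExp_mul_of_stronglyMeasurable_left stronglyMeasurable_condExp (hi _ hX) hρ
  refine e1.symm.trans ?_
  refine ae_eq_condExp_of_forall_setIntegral_eq hm (hi _ hF)
    (fun _ _ _ => integrable_condExp.integrableOn) ?_
    stronglyMeasurable_condExp.aestronglyMeasurable
  intro A hA _
  rw [setIntegral_condExp hm (hi _ hX) hA, ← hs _ _ (hm _ hA), ← hs _ _ (hm _ hA),
    setIntegral_condExp hm hF hA]

theorem aux_ext {Q : Type*} {mb mc md mO : MeasurableSpace Q} (hb : mb ≤ mO)
    (μ : Measure Q) [IsFiniteMeasure μ]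
    (hM : ∀ F : Q → ℝ, StronglyMeasurable[mb] F → (∃ C, ∀ x, |F x| ≤ C) →
      μ[F|mc] =ᵐ[μ] μ[F|md])
    (F : Q → ℝ) (hF : StronglyMeasurable[mb] F) (hFi : Integrable F μ) :
    μ[F|mc] =ᵐ[μ] μ[F|md] := by
  let f : ℕ → Q → ℝ := fun n => {x | |F x| ≤ n}.indicator F
  have hset : ∀ n : ℕ, MeasurableSet[mb] {x | |F x| ≤ n} := fun n =>
    (continuous_abs.comp_stronglyMeasurable hF).measurable measurableSet_Iic
  have hfm : ∀ n, StronglyMeasurable[mb] (f n) := fun n => hF.indicator (hset n)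
  have hfi : ∀ n, Integrable (f n) μ := fun n => hFi.indicator (hb _ (hset n))
  have hfb : ∀ n, ∃ C, ∀ x, |f n x| ≤ C := by
    refine fun n => ⟨n, fun x => ?_⟩
    by_cases h : |F x| ≤ n
    · simp [f, h]
    · simp [f, h]
  have hlim : Filter.Tendsto (fun n => ∫ x, |(F - f n) x| ∂μ) Filter.atTop (nhds 0) := by
    have : (0 : ℝ) = ∫ x, (0 : ℝ) ∂μ := by simp
    rw [this]
    refine tendsto_integral_of_dominated_convergence (fun x => |F x|)
      (fun n => (hFi.sub (hfi n)).abs.aestronglyMeasurable) hFi.abs ?_ ?_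
    · refine fun n => Filter.Eventually.of_forall fun x => ?_
      by_cases h : |F x| ≤ n
      · simp [f, h]
      · simp [f, h]
    · refine Filter.Eventually.of_forall fun x => ?_
      obtain ⟨N, hN⟩ := exists_nat_ge |F x|
      refine tendsto_const_nhds.congr' ?_
      filter_upwards [Filter.eventually_ge_atTop N] with n hn
      have : |F x| ≤ n := hN.trans (by exact_mod_cast hn)
      simp [f, this]
  have hbound : ∀ n, ∫ x, |(μ[F|mc]) x - (μ[F|md]) x| ∂μ ≤ 2 * ∫ x, |(F - f n) x| ∂μ := by
    intro n
    have a1 := integral_abs_condExp_le (μ := μ) (m := mc) (F - f n)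
    have a2 := integral_abs_condExp_le (μ := μ) (m := md) (F - f n)
    have i1 : Integrable (fun x => |(μ[F - f n|mc]) x|) μ := integrable_condExp.abs
    have i2 : Integrable (fun x => |(μ[F - f n|md]) x|) μ := integrable_condExp.abs
    have : ∫ x, |(μ[F|mc]) x - (μ[F|md]) x| ∂μ
        ≤ ∫ x, (|(μ[F - f n|mc]) x| + |(μ[F - f n|md]) x|) ∂μ := by
      refine integral_mono_ae (integrable_condExp.sub integrable_condExp).abs (i1.add i2) ?_
      filter_upwards [condExp_sub hFi (hfi n) mc, condExp_sub hFi (hfi n) md,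
        hM _ (hfm n) (hfb n)] with x b1 b2 b3
      simp only [b1, b2, Pi.sub_apply, b3]
      have := abs_sub_le ((μ[F|mc]) x) ((μ[f n|md]) x) ((μ[F|md]) x)
      rwa [abs_sub_comm ((μ[f n|md]) x)] at this
    rw [integral_add i1 i2] at this
    linarith
  have h0 : ∫ x, |(μ[F|mc]) x - (μ[F|md]) x| ∂μ ≤ 0 := by
    have := hlim.const_mul 2
    rw [mul_zero] at this
    exact ge_of_tendsto' this hbound
  have h00 := le_antisymm h0 (integral_nonneg fun x => abs_nonneg _)
  have hI : Integrable (fun x => |(μ[F|mc]) x - (μ[F|md]) x|) μ :=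
    (integrable_condExp.sub integrable_condExp).abs
  rw [integral_eq_zero_iff_of_nonneg (fun x => abs_nonneg _) hI] at h00
  filter_upwards [h00] with x hx
  have : |(μ[F|mc]) x - (μ[F|md]) x| = 0 := hx
  linarith [abs_eq_zero.mp this]

theorem aux_main {Q : Type*} (mΩbar mΩc mbd : MeasurableSpace Q)
    {mO : MeasurableSpace Q} (μ : Measure Q) [IsProbabilityMeasure μ]
    (h1 : mΩbar ≤ mO) (h2 : mΩc ≤ mO) (h3 : mbd ≤ mΩbar) (h4 : mbd ≤ mΩc)
    (V VΩ VΩc : Q → ℝ) (hV : V = VΩ + VΩc)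
    (hVΩ : StronglyMeasurable[mΩbar] VΩ) (hVΩc : StronglyMeasurable[mΩc] VΩc)
    (hint : Integrable (fun x => Real.exp (-V x)) μ)
    (hintc : Integrable (fun x => Real.exp (-VΩc x)) μ)
    (Z : ℝ) (hZ : Z = ∫ x, Real.exp (-V x) ∂μ) (hZpos : 0 < Z)
    (ν : @Measure Q mO)
    (hν : ν = μ.withDensity fun x => ENNReal.ofReal (Real.exp (-V x) / Z))
    (hMarkov : ∀ F : Q → ℝ, StronglyMeasurable[mΩbar] F → (∃ C, ∀ x, |F x| ≤ C) →
      μ[F|mΩc] =ᵐ[μ] μ[F|mbd]) :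
    ∀ F : Q → ℝ, StronglyMeasurable[mΩbar] F → (∃ C, ∀ x, |F x| ≤ C) →
      ν[F|mΩc] =ᵐ[ν] ν[F|mbd] := by
  intro F hF ⟨C, hC⟩
  set g : Q → ℝ := fun x => Real.exp (-VΩc x) with hg
  set f : Q → ℝ := fun x => Real.exp (-VΩ x) / Z with hf
  have hgc : StronglyMeasurable[mΩc] g := Real.continuous_exp.comp_stronglyMeasurable hVΩc.neg
  have hfb : StronglyMeasurable[mΩbar] f :=
    (Real.continuous_exp.div_const Z).comp_stronglyMeasurable hVΩ.neg
  have hgm : Measurable g := (hgc.mono h2).measurable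
  have hfm : Measurable f := (hfb.mono h1).measurable
  have hgp : ∀ x, 0 < g x := fun x => Real.exp_pos _
  have hfp : ∀ x, 0 < f x := fun x => div_pos (Real.exp_pos _) hZpos
  have hfg : ∀ x, Real.exp (-V x) / Z = f x * g x := by
    intro x
    simp only [hf, hg, hV, Pi.add_apply, neg_add, Real.exp_add]; ring
  obtain ⟨μ', hμ'⟩ : ∃ μ' : Measure Q, μ' = μ.withDensity fun x => ENNReal.ofReal (g x) :=
    ⟨_, rfl⟩
  have : IsFiniteMeasure μ' := by
    rw [hμ']; exact isFiniteMeasure_withDensity_ofReal hintc.2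
  have hν' : ν = μ'.withDensity fun x => ENNReal.ofReal (f x) := by
    rw [hν, hμ', ← withDensity_mul _ hgm.ennreal_ofReal hfm.ennreal_ofReal]
    congr 1; ext x
    rw [hfg, Pi.mul_apply, mul_comm, ENNReal.ofReal_mul (hgp x).le]
  have : IsFiniteMeasure ν := by
    rw [hν]; exact isFiniteMeasure_withDensity_ofReal (hint.div_const Z).2
  have hac : μ' ≪ μ := by rw [hμ']; exact withDensity_absolutelyContinuous _ _
  have hac' : ν ≪ μ' := by rw [hν']; exact withDensity_absolutelyContinuous _ _
  have bdi : ∀ (κ : Measure Q) [IsFiniteMeasure κ] (G : Q → ℝ), StronglyMeasurable[mΩbar] G →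
      (∃ C, ∀ x, |G x| ≤ C) → Integrable G κ := by
    intro κ _ G hG ⟨C, hC⟩
    exact Integrable.of_bound (hG.mono h1).aestronglyMeasurable C
      (Filter.Eventually.of_forall hC)
  have hfi : Integrable f μ' := by
    rw [hμ', integrable_withDensity_iff hgm.ennreal_ofReal (by simp)]
    simp only [ENNReal.toReal_ofReal (hgp _).le, ← hfg]
    exact hint.div_const Z
  have hM' : ∀ F : Q → ℝ, StronglyMeasurable[mΩbar] F → (∃ C, ∀ x, |F x| ≤ C) →
      μ'[F|mΩc] =ᵐ[μ'] μ'[F|mbd] := by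
    intro G hG hGb
    have hGi := bdi μ G hG hGb
    have hGi' := bdi μ' G hG hGb
    have e1 := aux_dens h2 μ μ' g hgm hintc hgp hμ' G hGi'
    have hGg : Integrable (fun x => G x * g x) μ := by
      obtain ⟨C, hC⟩ := hGb
      exact hintc.bdd_mul (hG.mono h1).aestronglyMeasurable (Filter.Eventually.of_forall hC)
    have e2 : μ[fun x => G x * g x|mΩc] =ᵐ[μ] fun x => (μ[G|mΩc]) x * g x :=
      condExp_mul_of_stronglyMeasurable_right hgc hGg hGi
    have e3 : μ[g|mΩc] = g := condExp_of_stronglyMeasurable h2 hgc hintc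
    have e4 : μ'[G|mΩc] =ᵐ[μ'] μ[G|mbd] := by
      apply hac.ae_eq
      filter_upwards [e1, e2, hMarkov G hG hGb] with x a1 a2 a3
      rw [e3, a2, a3] at a1
      exact mul_right_cancel₀ (hgp x).ne' a1
    have e5 : μ'[G|mbd] =ᵐ[μ'] μ[G|mbd] := by
      have t1 : μ'[μ'[G|mΩc]|mbd] =ᵐ[μ'] μ'[G|mbd] := condExp_condExp_of_le h4 h2
      have t2 : μ'[μ'[G|mΩc]|mbd] =ᵐ[μ'] μ'[μ[G|mbd]|mbd] := condExp_congr_ae e4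
      have t3 : μ'[μ[G|mbd]|mbd] = μ[G|mbd] :=
        condExp_of_stronglyMeasurable (h4.trans h2) stronglyMeasurable_condExp
          (integrable_condExp.congr e4)
      rw [t3] at t2
      exact t1.symm.trans t2
    exact e4.trans e5.symm
  have hFf : Integrable (fun x => F x * f x) μ' :=
    hfi.bdd_mul (hF.mono h1).aestronglyMeasurable (Filter.Eventually.of_forall hC)
  have m1 := aux_ext h1 μ' hM' f hfb hfi
  have m2 := aux_ext h1 μ' hM' (fun x => F x * f x) (hF.mul hfb) hFf
  have hFi := bdi ν F hF ⟨C, hC⟩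
  have d1 := aux_dens h2 μ' ν f hfm hfi hfp hν' F hFi
  have d2 := aux_dens (h4.trans h2) μ' ν f hfm hfi hfp hν' F hFi
  have p := aux_pos (h4.trans h2) μ' f hfi hfp
  apply hac'.ae_eq
  filter_upwards [m1, m2, d1, d2, p] with x m1 m2 d1 d2 p
  rw [m1, m2, ← d2] at d1
  exact mul_right_cancel₀ p.ne' d1

/-- Markov property for the interacting measure `dν = (e^{-V}/Z) dμ`: if `μ` satisfies
the Markov property (conditional expectation with respect to `O_{Ω^c}` of bounded
`O_{Ω̄}`-measurable functions agrees with that with respect to `O_{∂Ω}`), and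
`V = V_Ω + V_{Ω^c}` with `V_Ω` being `O_{Ω̄}`-measurable and `V_{Ω^c}` being
`O_{Ω^c}`-measurable, then `ν` satisfies the Markov property as well. -/
theorem stmt_19 {Q : Type*} {mO : MeasurableSpace Q} (μ : Measure Q)
    [IsProbabilityMeasure μ]
    (mΩbar mΩc mbd : MeasurableSpace Q)
    (h1 : mΩbar ≤ mO) (h2 : mΩc ≤ mO) (h3 : mbd ≤ mΩbar) (h4 : mbd ≤ mΩc)
    (V VΩ VΩc : Q → ℝ) (hV : V = VΩ + VΩc)
    (hVΩ : StronglyMeasurable[mΩbar] VΩ) (hVΩc : StronglyMeasurable[mΩc] VΩc)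
    (hint : Integrable (fun x => Real.exp (-V x)) μ)
    (hintc : Integrable (fun x => Real.exp (-VΩc x)) μ)
    (Z : ℝ) (hZ : Z = ∫ x, Real.exp (-V x) ∂μ) (hZpos : 0 < Z)
    (ν : @Measure Q mO)
    (hν : ν = μ.withDensity fun x => ENNReal.ofReal (Real.exp (-V x) / Z))
    (hMarkov : ∀ F : Q → ℝ, StronglyMeasurable[mΩbar] F → (∃ C, ∀ x, |F x| ≤ C) →
      μ[F|mΩc] =ᵐ[μ] μ[F|mbd]) :
    ∀ F : Q → ℝ, StronglyMeasurable[mΩbar] F → (∃ C, ∀ x, |F x| ≤ C) →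
      ν[F|mΩc] =ᵐ[ν] ν[F|mbd] := by
  exact aux_main mΩbar mΩc mbd μ h1 h2 h3 h4 V VΩ VΩc hV hVΩ hVΩc hint hintc Z hZ hZpos ν hν
    hMarkov
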